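/- Let G be a finite connected simple graph with vertex set V of size γ ≥ 2 and δ edges, and g : V → ℕ with p_a := (∑_{v∈V} g(v)) + δ − γ + 1 ≥ 2. Let d : V → ℤ satisfy d(v) ≥ 1 for all v, set d = ∑_{v∈V} d(v), and assume d ≥ p_a − 1. Define w(v) = d(v)/d, λ(v) = 1 − g(v) − w(v)·(1 − p_a), Δ_w(O_B) = (∑_{v∈B} λ(v)) − N(B), and deg_B(ω) = ∑_{v∈B} (2g(v) − 2 + deg(v)). Suppose that for every nonempty proper subset B ⊆ V the balanced inequality |(∑_{v∈B} d(v)) − (d/(2p_a − 2))·deg_B(ω)| ≤ δ_B/2 holds. Then for every nonempty proper subset B ⊆ V one has 0 ≤ Δ_w(O_B) ≤ δ_B; and if moreover d > p_a − 1, then 0 < Δ_w(O_B) < δ_B for every nonempty proper B. -/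

import Mathlib

open Finset

/-- A depth-one datum on a graph `G` (encoding a depth one sheaf on a nodal curve with
dual graph `G`): ranks `r` on vertices (components), and at each edge (node) `e` the
free rank `s e` of the stalk and torsion parts `a v e` attached to each endpoint `v`
of `e`, subject to the compatibility `r v = s e + a v e` for `v` an endpoint of `e`.
For an edge `e` with chosen endpoints `u_e, v_e`, the paper's `a(e)`, `b(e)` are
`a u_e e` and `a v_e e`. -/
structure DepthOneDatum {V : Type*} (G : SimpleGraph V) where
  r : V → ℕ
  s : Sym2 V → ℕ
  a : V → Sym2 V → ℕ
  compat : ∀ e ∈ G.edgeSet, ∀ v ∈ e, r v = s e + a v e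

variable {V : Type*} [Fintype V] [DecidableEq V]

/-- The defect `Δ = (∑ v, r v · λ v) − ∑ e, s e` of a depth-one datum
(equal to `Δ_w(E) = wdeg E − ∑ deg E_i` for the corresponding sheaf). -/
def DepthOneDatum.defect {G : SimpleGraph V} [DecidableRel G.Adj]
    (lam : V → ℚ) (D : DepthOneDatum G) : ℚ :=
  (∑ v : V, (D.r v : ℚ) * lam v) - ∑ e ∈ G.edgeFinset, (D.s e : ℚ)

/-- The residual rank `t_e = a(e) + b(e)` of a depth-one datum at an edge `e`. -/
def DepthOneDatum.tRes {G : SimpleGraph V} (D : DepthOneDatum G) (e : Sym2 V) : ℚ :=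
  Sym2.lift ⟨fun x y => (D.a x e : ℚ) + (D.a y e : ℚ), fun _ _ => add_comm _ _⟩ e

/-- A depth-one datum is locally free when all torsion parts `a`, `b` vanish at all edges. -/
def DepthOneDatum.LocFree {G : SimpleGraph V} (D : DepthOneDatum G) : Prop :=
  ∀ e ∈ G.edgeSet, ∀ v ∈ e, D.a v e = 0

/-- `N(B)`: the number of edges of `G` with both endpoints in `B`. -/
def insideCount (G : SimpleGraph V) [DecidableRel G.Adj] (B : Finset V) : ℕ :=
  (G.edgeFinset.filter (fun e => e ∈ B.sym2)).card

/-- `δ_B`: the number of edges of `G` with exactly one endpoint in `B`. -/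
def crossCount (G : SimpleGraph V) [DecidableRel G.Adj] (B : Finset V) : ℕ :=
  (G.edgeFinset.filter (fun e => e ∉ B.sym2 ∧ e ∉ Bᶜ.sym2)).card

/-- `Δ_w(O_B) = (∑_{v ∈ B} λ v) − N(B)`. -/
def DeltaO (G : SimpleGraph V) [DecidableRel G.Adj] (lam : V → ℚ) (B : Finset V) : ℚ :=
  (∑ v ∈ B, lam v) - (insideCount G B : ℚ)

/-!
With `p = p_a - 1` and `D` the total degree, adjunction `deg_B ω = 2 p_a(B) - 2 + δ_B` turns the
defect into `Δ_w(O_B) - δ_B / 2 = (p / D) * (d_B - (D / 2p) deg_B ω)`. The balanced inequality thus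
places `Δ_w(O_B)` within `(p / D) * δ_B / 2` of the midpoint of `[0, δ_B]`. It remains to observe
that `p / D ≤ 1`, with strict inequality when `D > p`, and that connectedness makes `δ_B` positive.
-/

/-- The degree of the dualizing sheaf on the subcurve with components `B`, that is
`deg_B ω = ∑_{v ∈ B} (2 g v - 2 + deg v)`. The genera may be arbitrary rational weights. -/
def dualizingDegree (G : SimpleGraph V) [DecidableRel G.Adj] (g : V → ℚ) (B : Finset V) : ℚ :=
  ∑ v ∈ B, (2 * g v - 2 + (G.degree v : ℚ))

section EdgeCounts

lemma card_filter_mem_eq_of_not_isDiag (B : Finset V) {e : Sym2 V} (he : ¬ e.IsDiag) :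
    #{v ∈ B | v ∈ e} =
      2 * (if e ∈ B.sym2 then 1 else 0) + if e ∉ B.sym2 ∧ e ∉ Bᶜ.sym2 then 1 else 0 := by
  induction e with
  | _ x y =>
    have hxy : x ≠ y := he
    have endpoints : {v ∈ B | v ∈ s(x, y)} = {v ∈ ({x, y} : Finset V) | v ∈ B} := by
      ext v
      simp [and_comm]
    rw [endpoints, card_filter, sum_pair hxy]
    by_cases hx : x ∈ B <;> by_cases hy : y ∈ B <;> simp [hx, hy]

variable (G : SimpleGraph V) [DecidableRel G.Adj]

lemma sum_degree_eq_two_mul_insideCount_add_crossCount (B : Finset V) :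
    ∑ v ∈ B, G.degree v = 2 * insideCount G B + crossCount G B := by
  calc ∑ v ∈ B, G.degree v
      = ∑ v ∈ B, #{e ∈ G.edgeFinset | v ∈ e} := by
        simp only [← G.card_incidenceFinset_eq_degree, G.incidenceFinset_eq_filter]
    _ = ∑ e ∈ G.edgeFinset, #{v ∈ B | v ∈ e} :=
        sum_card_bipartiteAbove_eq_sum_card_bipartiteBelow _
    _ = ∑ e ∈ G.edgeFinset, (2 * (if e ∈ B.sym2 then 1 else 0) +
          if e ∉ B.sym2 ∧ e ∉ Bᶜ.sym2 then 1 else 0) :=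
        sum_congr rfl fun e he ↦ card_filter_mem_eq_of_not_isDiag B <|
          G.not_isDiag_of_mem_edgeFinset he
    _ = 2 * insideCount G B + crossCount G B := by
        rw [sum_add_distrib, ← mul_sum, ← card_filter, ← card_filter, insideCount, crossCount]

variable {G} in
lemma crossCount_pos (hG : G.Preconnected) {B : Finset V} (hB : B.Nonempty) (hB' : B ≠ univ) :
    0 < crossCount G B := by
  obtain ⟨u, hu⟩ := hB
  obtain ⟨v, hv⟩ : ∃ v, v ∉ B := by simpa [eq_univ_iff_forall] using hB'
  obtain ⟨walk⟩ := hG u v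
  obtain ⟨dart, -, hfst, hsnd⟩ :=
    walk.exists_boundary_dart (B : Set V) (mem_coe.2 hu) (mt mem_coe.1 hv)
  rw [mem_coe] at hfst hsnd
  exact card_pos.2 ⟨s(dart.fst, dart.snd), by simp [dart.adj, hfst, hsnd]⟩

/-- Since `∑ g - #B + N(B) = p_a(B) - 1`, this is the adjunction formula for the subcurve `B`. -/
lemma dualizingDegree_eq (g : V → ℚ) (B : Finset V) :
    dualizingDegree G g B = 2 * (∑ v ∈ B, g v - #B + insideCount G B) + crossCount G B := by
  have degree_sum : ∑ v ∈ B, (G.degree v : ℚ) = 2 * insideCount G B + crossCount G B :=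
    mod_cast sum_degree_eq_two_mul_insideCount_add_crossCount G B
  rw [dualizingDegree, sum_add_distrib, sum_sub_distrib, ← mul_sum, degree_sum, sum_const,
    nsmul_eq_mul]
  ring

end EdgeCounts

section Defect

variable (G : SimpleGraph V) [DecidableRel G.Adj] (g d : V → ℚ) {p D : ℚ} {lam : V → ℚ}

lemma DeltaO_sub_half_crossCount (hp : p ≠ 0) (hD : D ≠ 0)
    (hlam : ∀ v, lam v = 1 - g v + d v / D * p) (B : Finset V) :
    DeltaO G lam B - crossCount G B / 2 =
      p / D * (∑ v ∈ B, d v - D / (2 * p) * dualizingDegree G g B) := by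
  have lam_sum : ∑ v ∈ B, lam v = #B - ∑ v ∈ B, g v + (∑ v ∈ B, d v) / D * p := by
    simp only [hlam, sum_add_distrib, sum_sub_distrib, sum_const, nsmul_eq_mul, mul_one,
      ← sum_mul, ← sum_div]
  rw [DeltaO, lam_sum, dualizingDegree_eq]
  field_simp
  ring

lemma abs_DeltaO_sub_half_crossCount_le (hp : 0 < p) (hD : 0 < D)
    (hlam : ∀ v, lam v = 1 - g v + d v / D * p) {B : Finset V}
    (hbal : |∑ v ∈ B, d v - D / (2 * p) * dualizingDegree G g B| ≤ (crossCount G B : ℚ) / 2) :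
    |DeltaO G lam B - crossCount G B / 2| ≤ p / D * (crossCount G B / 2) := by
  rw [DeltaO_sub_half_crossCount G g d hp.ne' hD.ne' hlam, abs_mul, abs_of_pos (div_pos hp hD)]
  gcongr

end Defect

section Midpoint

variable {K : Type*} [Field K] [LinearOrder K] [IsStrictOrderedRing K] {x b : K}

lemma abs_sub_half_le_half_iff : |x - b / 2| ≤ b / 2 ↔ 0 ≤ x ∧ x ≤ b := by
  rw [abs_le]
  constructor <;> rintro ⟨h₁, h₂⟩ <;> constructor <;> linarith

lemma abs_sub_half_lt_half_iff : |x - b / 2| < b / 2 ↔ 0 < x ∧ x < b := by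
  rw [abs_lt]
  constructor <;> rintro ⟨h₁, h₂⟩ <;> constructor <;> linarith

end Midpoint

theorem stmt_19_general (G : SimpleGraph V) [DecidableRel G.Adj]
    (g : V → ℚ) (pa : ℚ)
    (hpa : pa = (∑ v, g v) + (G.edgeFinset.card : ℚ) - (Fintype.card V : ℚ) + 1)
    (hpa1 : 1 < pa)
    (d : V → ℚ) (Dtot : ℚ) (hDtot : Dtot = ∑ v, d v) (hDge : pa - 1 ≤ Dtot)
    (w : V → ℚ) (hw : ∀ v, w v = d v / Dtot)
    (lam : V → ℚ) (hlam : ∀ v, lam v = 1 - g v - w v * (1 - pa))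
    (B : Finset V)
    (hbal : |(∑ v ∈ B, d v) - (Dtot / (2 * pa - 2)) * dualizingDegree G g B|
      ≤ (crossCount G B : ℚ) / 2) :
    (0 ≤ DeltaO G lam B ∧ DeltaO G lam B ≤ (crossCount G B : ℚ))
    ∧ (pa - 1 < Dtot → 0 < crossCount G B →
        0 < DeltaO G lam B ∧ DeltaO G lam B < (crossCount G B : ℚ)) := by
  have hp : 0 < pa - 1 := sub_pos.2 hpa1
  have hD : 0 < Dtot := hp.trans_le hDge
  have hlam' (v : V) : lam v = 1 - g v + d v / Dtot * (pa - 1) := by rw [hlam, hw]; ring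
  rw [show 2 * pa - 2 = 2 * (pa - 1) by ring] at hbal
  have near_midpoint := abs_DeltaO_sub_half_crossCount_le G g d hp hD hlam' hbal
  refine ⟨abs_sub_half_le_half_iff.1 <| near_midpoint.trans ?_, fun hlt hcross ↦
    abs_sub_half_lt_half_iff.1 <| near_midpoint.trans_lt ?_⟩
  · exact mul_le_of_le_one_left (by positivity) ((div_le_one hD).2 hDge)
  · exact mul_lt_of_lt_one_left (by positivity) ((div_lt_one hD).2 hlt)

/-- if `L` has multidegree `d` with `d v ≥ 1`, total degree
`Dtot ≥ p_a − 1 ≥ 1`, and satisfies the balanced inequality for every nonempty proper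
`B`, then the induced polarization `w v = d v / Dtot` satisfies `0 ≤ Δ_w(O_B) ≤ δ_B`
for every nonempty proper `B`, with strict inequalities when `Dtot > p_a − 1`. -/
theorem stmt_19 (G : SimpleGraph V) [DecidableRel G.Adj]
    (hG : G.Connected) (hγ : 2 ≤ Fintype.card V)
    (g : V → ℕ) (pa : ℚ)
    (hpa : pa = (∑ v, (g v : ℚ)) + (G.edgeFinset.card : ℚ) - (Fintype.card V : ℚ) + 1)
    (hpa2 : 2 ≤ pa)
    (d : V → ℤ) (hd : ∀ v, 1 ≤ d v)
    (Dtot : ℚ) (hDtot : Dtot = ∑ v, (d v : ℚ)) (hDge : pa - 1 ≤ Dtot)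
    (w : V → ℚ) (hw : ∀ v, w v = (d v : ℚ) / Dtot)
    (lam : V → ℚ) (hlam : ∀ v, lam v = 1 - (g v : ℚ) - w v * (1 - pa))
    (hbal : ∀ B : Finset V, B.Nonempty → B ≠ Finset.univ →
      |(∑ v ∈ B, (d v : ℚ))
          - (Dtot / (2 * pa - 2)) * (∑ v ∈ B, (2 * (g v : ℚ) - 2 + (G.degree v : ℚ)))|
        ≤ (crossCount G B : ℚ) / 2) :
    (∀ B : Finset V, B.Nonempty → B ≠ Finset.univ →
        0 ≤ DeltaO G lam B ∧ DeltaO G lam B ≤ (crossCount G B : ℚ))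
    ∧ (pa - 1 < Dtot → ∀ B : Finset V, B.Nonempty → B ≠ Finset.univ →
        0 < DeltaO G lam B ∧ DeltaO G lam B < (crossCount G B : ℚ)) := by
  have main (B : Finset V) (hB : B.Nonempty) (hB' : B ≠ univ) :=
    stmt_19_general G (fun v ↦ (g v : ℚ)) pa hpa (by linarith) (fun v ↦ (d v : ℚ)) Dtot hDtot hDge
      w hw lam hlam B (hbal B hB hB')
  exact ⟨fun B hB hB' ↦ (main B hB hB').1, fun hlt B hB hB' ↦
    (main B hB hB').2 hlt (crossCount_pos hG.preconnected hB hB')⟩
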